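/- arXiv:2106.05333 — 2 statements merged into one kernel-verified Lean document; each statement's English description precedes it below -/
import Mathlib

section
/- For every integer n ≥ 3, the complete graph K_n is dimension-critical; moreover, for every edge e of K_n, dim(K_n − e) = n − 2. -/
/-- `G` has a unit-distance representation in `ℝ^n`: an injective map of the vertices to
points of Euclidean `n`-space with adjacent vertices at Euclidean distance exactly `1`. -/
def SimpleGraph.HasUnitDistRep {V : Type*} (G : SimpleGraph V) (n : ℕ) : Prop :=
  ∃ f : V → EuclideanSpace ℝ (Fin n),
    Function.Injective f ∧ ∀ ⦃u v⦄, G.Adj u v → Dist.dist (f u) (f v) = 1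

/-- The dimension of `G`: the least `n` such that `G` has a unit-distance representation
in `ℝ^n`. -/
noncomputable def SimpleGraph.udim {V : Type*} (G : SimpleGraph V) : ℕ :=
  sInf {n | G.HasUnitDistRep n}

/-- `G` is dimension-critical: deleting any edge strictly lowers the dimension. -/
def SimpleGraph.IsDimCritical {V : Type*} (G : SimpleGraph V) : Prop :=
  ∀ e ∈ G.edgeSet, (G.deleteEdges {e}).udim < G.udim

/-!
Points at pairwise distance `1` are affinely independent, so a clique on `d + 1` vertices forces
dimension at least `d`. Conversely, `d + 1` vertices of a regular simplex of side `1` fit in `ℝ^d`;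
reflecting one vertex in the hyperplane through the others gives a new point at distance `1` from
all of these others, and the resulting `d + 2` points represent the complete graph minus an edge.
-/

section EuclideanGeometry

variable {ι V P : Type*} [NormedAddCommGroup V] [InnerProductSpace ℝ V] [MetricSpace P]
  [NormedAddTorsor V P]

theorem affineIndependent_of_pairwise_dist_eq {p : ι → P} {r : ℝ} (hr : r ≠ 0)
    (hp : Pairwise fun i j ↦ dist (p i) (p j) = r) : AffineIndependent ℝ p := by
  classical
  intro s w hw hzero
  have sq_dist (i j : ι) :
      dist (p i) (p j) * dist (p i) (p j) = r ^ 2 - if i = j then r ^ 2 else 0 := by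
    split_ifs with hij
    · simp [hij]
    · rw [hp hij, sub_zero, sq]
  have double_sum : ∑ i ∈ s, ∑ j ∈ s, w i * w j * (dist (p i) (p j) * dist (p i) (p j)) =
      -(r ^ 2 * ∑ i ∈ s, w i ^ 2) := by
    calc _ = ∑ i ∈ s, (w i * r ^ 2 * ∑ j ∈ s, w j - r ^ 2 * w i ^ 2) := by
          refine Finset.sum_congr rfl fun i hi ↦ ?_
          simp only [sq_dist, mul_sub, Finset.sum_sub_distrib, mul_ite, mul_zero,
            Finset.sum_ite_eq, if_pos hi, Finset.mul_sum]
          congr 1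
          · exact Finset.sum_congr rfl fun j _ ↦ by ring
          · ring
      _ = _ := by simp [hw, Finset.mul_sum]
  have norm_sq := EuclideanGeometry.inner_weightedVSub p hw p hw
  rw [hzero, inner_zero_left, double_sum, neg_neg] at norm_sq
  have sum_sq : ∑ i ∈ s, w i ^ 2 = 0 := by
    simpa [hr] using norm_sq.symm
  intro i hi
  exact pow_eq_zero_iff two_ne_zero |>.1 <|
    (Finset.sum_eq_zero_iff_of_nonneg fun j _ ↦ sq_nonneg (w j)).1 sum_sq i hi

theorem dist_eq_sqrt_two_of_orthonormal {v : ι → V} (hv : Orthonormal ℝ v) {i j : ι}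
    (hij : i ≠ j) : dist (v i) (v j) = √2 := by
  rw [dist_eq_norm, ← Real.sqrt_sq (norm_nonneg _), norm_sub_sq_real, hv.1, hv.1, hv.2 hij]
  norm_num

theorem exists_ne_forall_dist_eq_of_affineIndependent [Finite ι] [Nontrivial ι] {p : ι → P}
    (hp : AffineIndependent ℝ p) (i : ι) :
    ∃ q, q ≠ p i ∧ ∀ j ≠ i, dist (p j) q = dist (p j) (p i) := by
  let facet := affineSpan ℝ (p '' {i}ᶜ)
  have : Nonempty facet := by
    obtain ⟨j, hj⟩ := exists_ne i
    exact ⟨⟨p j, mem_affineSpan ℝ (Set.mem_image_of_mem p hj)⟩⟩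
  have : FiniteDimensional ℝ facet.direction :=
    finiteDimensional_direction_affineSpan_of_finite ℝ (Set.toFinite _)
  refine ⟨EuclideanGeometry.reflection facet (p i), fun h ↦ ?_, fun j hj ↦ ?_⟩
  · have notMem : p i ∉ facet := by
      simpa only [facet, Set.compl_eq_univ_sdiff] using hp.notMem_affineSpan_sdiff i Set.univ
    exact notMem ((EuclideanGeometry.reflection_eq_self_iff _).1 h)
  · exact EuclideanGeometry.dist_reflection_eq_of_mem facet
      (mem_affineSpan ℝ (Set.mem_image_of_mem p hj)) (p i)

end EuclideanGeometry

section UnitDistance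

variable {V : Type*} {G : SimpleGraph V} {d : ℕ}

theorem hasUnitDistRep_finrank_vectorSpan {E P : Type*} [NormedAddCommGroup E]
    [InnerProductSpace ℝ E] [MetricSpace P] [NormedAddTorsor E P] {p : V → P}
    [FiniteDimensional ℝ (vectorSpan ℝ (Set.range p))] (hinj : Function.Injective p)
    (hp : ∀ ⦃u v⦄, G.Adj u v → dist (p u) (p v) = 1) :
    G.HasUnitDistRep (Module.finrank ℝ (vectorSpan ℝ (Set.range p))) := by
  cases isEmpty_or_nonempty V with
  | inl _ => exact ⟨isEmptyElim, isEmptyElim, isEmptyElim⟩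
  | inr hV =>
    obtain ⟨o⟩ := hV
    let coords := (stdOrthonormalBasis ℝ (vectorSpan ℝ (Set.range p))).repr
    let f (u : V) := coords
      ⟨p u -ᵥ p o, vsub_mem_vectorSpan ℝ (Set.mem_range_self u) (Set.mem_range_self o)⟩
    have dist_f (u v : V) : dist (f u) (f v) = dist (p u) (p v) := by
      simp only [f, coords.dist_map, Subtype.dist_eq, dist_vsub_cancel_right]
    refine ⟨f, fun u v huv ↦ hinj ?_, fun u v huv ↦ (dist_f u v).trans (hp huv)⟩
    rw [← dist_eq_zero, ← dist_f, huv, dist_self]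

theorem hasUnitDistRep_top [Fintype V] (hV : Fintype.card V = d + 1) :
    (⊤ : SimpleGraph V).HasUnitDistRep d := by
  let basis := EuclideanSpace.basisFun V ℝ
  let p (v : V) : EuclideanSpace ℝ V := (√2)⁻¹ • basis v
  have hp : Pairwise fun u v ↦ dist (p u) (p v) = 1 := fun u v huv ↦ by
    calc dist (p u) (p v) = ‖(√2)⁻¹‖ * dist (basis u) (basis v) := dist_smul₀ _ _ _
      _ = (√2)⁻¹ * √2 := by
        rw [Real.norm_of_nonneg (by positivity),
          dist_eq_sqrt_two_of_orthonormal basis.orthonormal huv]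
      _ = 1 := inv_mul_cancel₀ (by positivity)
  have indep := affineIndependent_of_pairwise_dist_eq one_ne_zero hp
  rw [← indep.finrank_vectorSpan hV]
  exact hasUnitDistRep_finrank_vectorSpan indep.injective fun u v huv ↦ hp huv

theorem hasUnitDistRep_of_compl_singleton {v : V} (f : {w // w ≠ v} → EuclideanSpace ℝ (Fin d))
    (hinj : Function.Injective f) (hf : ∀ ⦃u w⦄, G.Adj u.1 w.1 → dist (f u) (f w) = 1)
    {q : EuclideanSpace ℝ (Fin d)} (hq : q ∉ Set.range f)
    (hqf : ∀ u, G.Adj u.1 v → dist (f u) q = 1) : G.HasUnitDistRep d := by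
  let g := Function.extend Subtype.val f fun _ ↦ q
  have g_self : g v = q := Function.extend_apply' _ _ _ (by simp)
  have g_coe (u : {w // w ≠ v}) : g u = f u := Subtype.val_injective.extend_apply _ _ u
  have eq_of_g_eq {u : V} (hu : g u = q) : u = v := by
    by_contra huv
    exact hq ⟨⟨u, huv⟩, (g_coe ⟨u, huv⟩).symm.trans hu⟩
  have dist_g_self {u : V} (hu : G.Adj u v) : dist (g u) (g v) = 1 := by
    rw [g_self, g_coe ⟨u, hu.ne⟩]
    exact hqf ⟨u, hu.ne⟩ hu
  refine ⟨g, fun u w huw ↦ ?_, fun u w huw ↦ ?_⟩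
  · by_cases hu : u = v
    · exact hu.trans (eq_of_g_eq (by rw [← huw, hu, g_self])).symm
    by_cases hw : w = v
    · exact (eq_of_g_eq (by rw [huw, hw, g_self])).trans hw.symm
    rw [g_coe ⟨u, hu⟩, g_coe ⟨w, hw⟩] at huw
    exact congrArg Subtype.val (hinj huw)
  · by_cases hu : u = v
    · subst hu
      exact (dist_comm _ _).trans (dist_g_self huw.symm)
    by_cases hw : w = v
    · subst hw
      exact dist_g_self huw
    rw [g_coe ⟨u, hu⟩, g_coe ⟨w, hw⟩]
    exact hf huw

theorem hasUnitDistRep_top_deleteEdges_singleton [Fintype V] (hV : Fintype.card V = d + 2)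
    (hd : d ≠ 0) {u v : V} (huv : u ≠ v) :
    ((⊤ : SimpleGraph V).deleteEdges {s(u, v)}).HasUnitDistRep d := by
  classical
  have card_compl : Fintype.card {w // w ≠ v} = d + 1 := by
    simp [hV]
  obtain ⟨f, hinj, hf⟩ := hasUnitDistRep_top card_compl
  have : Nontrivial {w // w ≠ v} := Fintype.one_lt_card_iff_nontrivial.1 (by omega)
  obtain ⟨q, hqu, hq⟩ := exists_ne_forall_dist_eq_of_affineIndependent
    (affineIndependent_of_pairwise_dist_eq one_ne_zero fun _ _ h ↦ hf h) ⟨u, huv⟩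
  have dist_q (w) (hw : w ≠ ⟨u, huv⟩) : dist (f w) q = 1 := (hq w hw).trans (hf hw)
  refine hasUnitDistRep_of_compl_singleton f hinj (q := q) (fun w x hwx ↦ hf ?_) ?_ fun w hw ↦
    dist_q w ?_
  · exact fun h ↦ hwx.ne (congrArg Subtype.val h)
  · rintro ⟨w, rfl⟩
    have hw : w ≠ ⟨u, huv⟩ := fun h ↦ hqu (congrArg f h)
    simpa using dist_q w hw
  · rintro rfl
    simp at hw

theorem card_le_of_isClique (hG : G.HasUnitDistRep d) {s : Finset V} (hs : G.IsClique s) :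
    s.card ≤ d + 1 := by
  obtain ⟨f, -, hf⟩ := hG
  have indep : AffineIndependent ℝ fun v : s ↦ f v :=
    affineIndependent_of_pairwise_dist_eq one_ne_zero fun u v huv ↦
      hf (hs u.2 v.2 (Subtype.coe_ne_coe.2 huv))
  calc s.card = Fintype.card s := (Fintype.card_coe s).symm
    _ ≤ Module.finrank ℝ (vectorSpan ℝ (Set.range fun v : s ↦ f v)) + 1 :=
      indep.card_le_finrank_succ
    _ ≤ d + 1 := by
      gcongr
      simpa using Submodule.finrank_le (vectorSpan ℝ (Set.range fun v : s ↦ f v))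

theorem udim_eq_of_isNClique (hG : G.HasUnitDistRep d) {s : Finset V}
    (hs : G.IsNClique (d + 1) s) : G.udim = d := by
  refine le_antisymm (Nat.sInf_le hG) (le_csInf ⟨d, hG⟩ fun n hn ↦ ?_)
  have card_le : d + 1 ≤ n + 1 := hs.card_eq ▸ card_le_of_isClique hn hs.isClique
  exact Nat.le_of_succ_le_succ card_le

theorem udim_top [Fintype V] (hV : Fintype.card V = d + 1) : (⊤ : SimpleGraph V).udim = d :=
  udim_eq_of_isNClique (s := Finset.univ) (hasUnitDistRep_top hV)
    ⟨fun _ _ _ _ h ↦ h, hV⟩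

theorem udim_top_deleteEdges_singleton [Fintype V] (hV : Fintype.card V = d + 2) (hd : d ≠ 0)
    {e : Sym2 V} (he : e ∈ (⊤ : SimpleGraph V).edgeSet) :
    ((⊤ : SimpleGraph V).deleteEdges {e}).udim = d := by
  classical
  induction e with
  | h u v =>
    refine udim_eq_of_isNClique (s := {v}ᶜ) (hasUnitDistRep_top_deleteEdges_singleton hV hd he) ?_
    refine ⟨fun w hw x hx hwx ↦ ?_, ?_⟩
    · have hw : w ≠ v := by simpa using hw
      have hx : x ≠ v := by simpa using hx
      simp [hwx, hw, hx]
    · simp [Finset.card_compl, hV]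

end UnitDistance

theorem completeGraph_isDimCritical_general {V : Type*} [Fintype V] (hV : 3 ≤ Fintype.card V) :
    (⊤ : SimpleGraph V).IsDimCritical ∧
      ∀ e ∈ (⊤ : SimpleGraph V).edgeSet,
        ((⊤ : SimpleGraph V).deleteEdges {e}).udim = Fintype.card V - 2 := by
  obtain ⟨d, hd⟩ := Nat.exists_eq_add_of_le' hV
  have dim_delete (e) (he : e ∈ (⊤ : SimpleGraph V).edgeSet) :
      ((⊤ : SimpleGraph V).deleteEdges {e}).udim = d + 1 :=
    udim_top_deleteEdges_singleton hd d.succ_ne_zero he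
  refine ⟨fun e he ↦ ?_, fun e he ↦ ?_⟩
  · rw [dim_delete e he, udim_top hd]
    exact Nat.lt_succ_self (d + 1)
  · rw [dim_delete e he, hd]
    rfl

theorem completeGraph_isDimCritical (n : ℕ) (hn : 3 ≤ n) :
    (⊤ : SimpleGraph (Fin n)).IsDimCritical ∧
      ∀ e ∈ (⊤ : SimpleGraph (Fin n)).edgeSet,
        ((⊤ : SimpleGraph (Fin n)).deleteEdges {e}).udim = n - 2 := by
  simpa only [Fintype.card_fin] using
    completeGraph_isDimCritical_general (V := Fin n) (by simpa using hn)
end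

section
/- For every integer α ≥ 1, the graph G(α, 1, 1) is not dimension-critical. -/
/-- Part sizes for the complete multipartite graph `G(α, β, γ)`:
`α` parts of size 1, `β` parts of size 2, `γ` parts of size 3. -/
def Gsize (α β γ : ℕ) : Fin α ⊕ Fin β ⊕ Fin γ → ℕ
  | Sum.inl _ => 1
  | Sum.inr (Sum.inl _) => 2
  | Sum.inr (Sum.inr _) => 3

/-- The complete multipartite graph `G(α, β, γ)` with `α` parts of size 1, `β` parts of
size 2, and `γ` parts of size 3; vertices are adjacent iff they lie in different parts. -/
def Gmp (α β γ : ℕ) :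
    SimpleGraph (Σ i : Fin α ⊕ Fin β ⊕ Fin γ, Fin (Gsize α β γ i)) :=
  SimpleGraph.completeMultipartiteGraph fun i => Fin (Gsize α β γ i)

/-!
Once `β + γ ≥ 2`, the dimension of `G(α, β, γ)` is `α + β + 2γ`. The vertices of a cross-polytope
with edge length `1` realize this value: a part of size at most two occupies one coordinate axis,
and a part of size three occupies two.

For the lower bound, two sets of points at constant mutual distance span orthogonal directions, so
the ranks of the parts add up. A pair has rank one and a triple, lying on a sphere about any vertex
of another part, has rank two. A singleton `y` raises the rank of a set at constant distance `r`
from it as soon as some other point `z` is also at distance `r` from that set: the span of the set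
lies in the perpendicular bisector of `y` and `z`, which misses `y`.

Finally, deleting one edge between a singleton and a pair leaves room to regard the three vertices
as a triple, so what remains contains `G(α - 1, β - 1, γ + 1)`, a graph of the same dimension.
-/

open Module EuclideanGeometry SimpleGraph

lemma finrank_vectorSpan_range_fin_two {k V P : Type*} [DivisionRing k] [AddCommGroup V]
    [Module k V] [AddTorsor V P] {p : Fin 2 → P} (hp : Function.Injective p) :
    finrank k (vectorSpan k (Set.range p)) = 1 := by
  have hind : AffineIndependent k ![p 0, p 1] := affineIndependent_of_ne k (hp.ne Fin.zero_ne_one)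
  rw [← FinVec.etaExpand_eq p]
  exact hind.finrank_vectorSpan rfl

section Equidistant

variable {V P : Type*} [NormedAddCommGroup V] [InnerProductSpace ℝ V] [MetricSpace P]
  [NormedAddTorsor V P]

lemma isOrtho_vectorSpan_of_dist_eq {s t : Set P} {r : P → ℝ}
    (h : ∀ x ∈ s, ∀ y ∈ t, dist x y = r y) : vectorSpan ℝ s ⟂ vectorSpan ℝ t := by
  rw [vectorSpan_def, vectorSpan_def, Submodule.isOrtho_span]
  rintro _ ⟨x, hx, x', hx', rfl⟩ _ ⟨y, hy, y', hy', rfl⟩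
  rw [real_inner_comm]
  exact inner_vsub_vsub_of_dist_eq_of_dist_eq ((h x' hx' y' hy').trans (h x hx y' hy').symm)
    ((h x' hx' y hy).trans (h x hx y hy).symm)

lemma notMem_affineSpan_of_dist_eq {s : Set P} {y z : P} (hyz : y ≠ z)
    (h : ∀ x ∈ s, dist x y = dist x z) : y ∉ affineSpan ℝ s := by
  have hs : affineSpan ℝ s ≤ AffineSubspace.perpBisector y z :=
    affineSpan_le.2 fun x hx => AffineSubspace.mem_perpBisector_iff_dist_eq.2 (h x hx)
  exact fun hy => hyz (AffineSubspace.left_mem_perpBisector.1 (hs hy))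

variable [FiniteDimensional ℝ V]

lemma finrank_vectorSpan_add_finrank_vectorSpan_le_union {s t : Set P} {r : P → ℝ}
    (h : ∀ x ∈ s, ∀ y ∈ t, dist x y = r y) :
    finrank ℝ (vectorSpan ℝ s) + finrank ℝ (vectorSpan ℝ t) ≤
      finrank ℝ (vectorSpan ℝ (s ∪ t)) := by
  have hsup : vectorSpan ℝ s ⊔ vectorSpan ℝ t ≤ vectorSpan ℝ (s ∪ t) :=
    sup_le (vectorSpan_mono ℝ Set.subset_union_left) (vectorSpan_mono ℝ Set.subset_union_right)
  have hinf := (isOrtho_vectorSpan_of_dist_eq h).disjoint.eq_bot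
  rw [← Submodule.finrank_sup_add_finrank_inf_eq, hinf, finrank_bot, add_zero]
  exact Submodule.finrank_mono hsup

lemma sum_finrank_vectorSpan_le_biUnion {ι : Type*} (I : Finset ι) {s : ι → Set P} {r : ℝ}
    (h : Pairwise fun i j => ∀ x ∈ s i, ∀ y ∈ s j, dist x y = r) :
    ∑ i ∈ I, finrank ℝ (vectorSpan ℝ (s i)) ≤ finrank ℝ (vectorSpan ℝ (⋃ i ∈ I, s i)) := by
  classical
  induction I using Finset.induction_on with
  | empty => simp
  | insert i I hi ih =>
    have hdist : ∀ x ∈ s i, ∀ y ∈ ⋃ j ∈ I, s j, dist x y = r := by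
      intro x hx y hy
      obtain ⟨j, hj, hy⟩ := Set.mem_iUnion₂.1 hy
      exact h (ne_of_mem_of_not_mem hj hi).symm x hx y hy
    rw [Finset.sum_insert hi, Finset.set_biUnion_insert]
    exact (Nat.add_le_add_left ih _).trans
      (finrank_vectorSpan_add_finrank_vectorSpan_le_union hdist)

lemma finrank_vectorSpan_lt_insert {s : Set P} (hs : s.Nonempty) {y : P}
    (hy : y ∉ affineSpan ℝ s) :
    finrank ℝ (vectorSpan ℝ s) < finrank ℝ (vectorSpan ℝ (insert y s)) := by
  have hlt : affineSpan ℝ s < affineSpan ℝ (insert y s) :=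
    (affineSpan_mono ℝ (Set.subset_insert y s)).lt_of_not_ge fun hle =>
      hy (hle (mem_affineSpan ℝ (Set.mem_insert y s)))
  rw [← direction_affineSpan, ← direction_affineSpan]
  exact Submodule.finrank_lt_finrank_of_lt
    (AffineSubspace.direction_lt_of_nonempty hlt (hs.affineSpan ℝ))

lemma finrank_vectorSpan_add_card_le_union {s : Set P} (hs : s.Nonempty) {t : Finset P} {z : P}
    (hz : z ∉ t) {r : ℝ} (hst : ∀ x ∈ s, ∀ y ∈ insert z (t : Set P), dist x y = r)
    (ht : (insert z (t : Set P)).Pairwise fun x y => dist x y = r) :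
    finrank ℝ (vectorSpan ℝ s) + t.card ≤ finrank ℝ (vectorSpan ℝ (s ∪ t)) := by
  classical
  induction t using Finset.induction_on with
  | empty => rw [Finset.card_empty, Finset.coe_empty, Set.union_empty, add_zero]
  | insert y t hy ih =>
    have hyz : y ≠ z := fun h => hz (h ▸ Finset.mem_insert_self y t)
    have hsub : insert z (t : Set P) ⊆ insert z ↑(insert y t) :=
      Set.insert_subset_insert (Finset.coe_subset.2 (Finset.subset_insert y t))
    have hzmem : z ∈ insert z (↑(insert y t) : Set P) := Set.mem_insert _ _
    have hymem : y ∈ insert z (↑(insert y t) : Set P) := by simp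
    have hyspan : y ∉ affineSpan ℝ (s ∪ t) := by
      refine notMem_affineSpan_of_dist_eq hyz ?_
      rintro x (hx | hx)
      · rw [hst x hx y hymem, hst x hx z hzmem]
      · have hxmem := hsub (Set.mem_insert_of_mem z hx)
        have hxy : x ≠ y := ne_of_mem_of_not_mem hx hy
        have hxz : x ≠ z := fun h => hz (h ▸ Finset.mem_insert_of_mem hx)
        rw [ht hxmem hymem hxy, ht hxmem hzmem hxz]
    have hle := ih (fun h => hz (Finset.mem_insert_of_mem h))
      (fun x hx y hy => hst x hx y (hsub hy)) (ht.mono hsub)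
    have hlt := finrank_vectorSpan_lt_insert (hs.inl (t := t)) hyspan
    rw [Finset.card_insert_of_notMem hy, Finset.coe_insert, Set.union_insert]
    omega

lemma finrank_vectorSpan_add_card_add_finrank_vectorSpan_le {s s' : Set P} (hs : s.Nonempty)
    (hs' : s'.Nonempty) {t : Finset P} {r : ℝ} (hr : r ≠ 0)
    (hss' : ∀ x ∈ s, ∀ y ∈ s', dist x y = r) (hst : ∀ x ∈ s ∪ s', ∀ y ∈ t, dist x y = r)
    (ht : (t : Set P).Pairwise fun x y => dist x y = r) :
    finrank ℝ (vectorSpan ℝ s) + t.card + finrank ℝ (vectorSpan ℝ s') ≤ finrank ℝ V := by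
  obtain ⟨z, hz⟩ := hs'
  have hzt : ∀ y ∈ t, dist z y = r := hst z (.inr hz)
  have hz_notMem : z ∉ t := fun h => hr ((hzt z h).symm.trans (dist_self z))
  have hs_insert : ∀ x ∈ s, ∀ y ∈ insert z (t : Set P), dist x y = r := by
    rintro x hx y (rfl | hy)
    · exact hss' x hx y hz
    · exact hst x (.inl hx) y hy
  have ht_insert : (insert z (t : Set P)).Pairwise fun x y => dist x y = r :=
    ht.insert fun y hy _ => ⟨hzt y hy, (dist_comm y z).trans (hzt y hy)⟩
  have hunion : ∀ x ∈ s ∪ t, ∀ y ∈ s', dist x y = r := by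
    rintro x (hx | hx) y hy
    · exact hss' x hx y hy
    · exact (dist_comm x y).trans (hst y (.inr hy) x hx)
  calc finrank ℝ (vectorSpan ℝ s) + t.card + finrank ℝ (vectorSpan ℝ s')
      ≤ finrank ℝ (vectorSpan ℝ (s ∪ t)) + finrank ℝ (vectorSpan ℝ s') := by
        gcongr
        exact finrank_vectorSpan_add_card_le_union hs hz_notMem hs_insert ht_insert
    _ ≤ finrank ℝ (vectorSpan ℝ (s ∪ t ∪ s')) :=
        finrank_vectorSpan_add_finrank_vectorSpan_le_union hunion
    _ ≤ finrank ℝ V := Submodule.finrank_le _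

lemma sum_finrank_vectorSpan_add_card_le_finrank {ι κ : Type*} [Fintype ι] [Nontrivial ι]
    [Fintype κ] {s : ι → Set P} (hs : ∀ i, (s i).Nonempty) {t : κ → P} {r : ℝ} (hr : r ≠ 0)
    (hss : Pairwise fun i j => ∀ x ∈ s i, ∀ y ∈ s j, dist x y = r)
    (hst : ∀ i, ∀ x ∈ s i, ∀ k, dist x (t k) = r)
    (ht : Pairwise fun k l => dist (t k) (t l) = r) :
    ∑ i, finrank ℝ (vectorSpan ℝ (s i)) + Fintype.card κ ≤ finrank ℝ V := by
  classical
  obtain ⟨i, j, hij⟩ := exists_pair_ne ι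
  have ht_inj : Function.Injective t := by
    intro k l hkl
    by_contra hne
    exact hr ((ht hne).symm.trans (dist_eq_zero.2 hkl))
  set rest := ⋃ k ∈ Finset.univ.erase i, s k
  have hrest : rest.Nonempty :=
    (hs j).mono (Set.subset_biUnion_of_mem (by simpa using hij.symm))
  have hrest_dist : ∀ x ∈ rest, ∀ y ∈ s i, dist x y = r := by
    intro x hx y hy
    obtain ⟨k, hk, hx⟩ := Set.mem_iUnion₂.1 hx
    exact hss (Finset.ne_of_mem_erase hk) x hx y hy
  have himage_dist : ∀ x ∈ rest ∪ s i, ∀ y ∈ Finset.univ.image t, dist x y = r := by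
    intro x hx y hy
    obtain ⟨l, -, rfl⟩ := Finset.mem_image.1 hy
    rcases hx with hx | hx
    · obtain ⟨k, -, hx⟩ := Set.mem_iUnion₂.1 hx
      exact hst k x hx l
    · exact hst i x hx l
  have himage_pairwise : (Finset.univ.image t : Set P).Pairwise fun x y => dist x y = r := by
    rw [Finset.coe_image, Finset.coe_univ, Set.image_univ]
    exact ht.range_pairwise
  have hle := finrank_vectorSpan_add_card_add_finrank_vectorSpan_le hrest (hs i) hr hrest_dist
    himage_dist himage_pairwise
  have hsum : ∑ k ∈ Finset.univ.erase i, finrank ℝ (vectorSpan ℝ (s k)) ≤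
      finrank ℝ (vectorSpan ℝ rest) := sum_finrank_vectorSpan_le_biUnion _ hss
  rw [Finset.card_image_of_injective _ ht_inj, Finset.card_univ] at hle
  rw [← Finset.sum_erase_add _ _ (Finset.mem_univ i)]
  omega

end Equidistant

section UnitDistRep

variable {V W : Type*} {G : SimpleGraph V} {H : SimpleGraph W} {n : ℕ}

lemma hasUnitDistRep_of_isContained (hGH : G ⊑ H) (hH : H.HasUnitDistRep n) :
    G.HasUnitDistRep n := by
  obtain ⟨φ⟩ := hGH
  obtain ⟨f, hf, hdist⟩ := hH
  exact ⟨f ∘ φ, hf.comp φ.injective, fun _ _ huv => hdist (φ.toHom.map_adj huv)⟩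

lemma udim_le_of_isContained (hGH : G ⊑ H) (hH : H.HasUnitDistRep n) : G.udim ≤ H.udim :=
  have hmem : H.HasUnitDistRep H.udim := Nat.sInf_mem (s := {n | H.HasUnitDistRep n}) ⟨n, hH⟩
  Nat.sInf_le (hasUnitDistRep_of_isContained hGH hmem)

lemma hasUnitDistRep_finrank {E : Type*} [NormedAddCommGroup E] [InnerProductSpace ℝ E]
    [FiniteDimensional ℝ E] {f : V → E} (hf : Function.Injective f)
    (hdist : ∀ ⦃u v⦄, G.Adj u v → dist (f u) (f v) = 1) : G.HasUnitDistRep (finrank ℝ E) :=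
  have e := (stdOrthonormalBasis ℝ E).repr
  ⟨e ∘ f, e.injective.comp hf, fun _ _ huv => (e.dist_map _ _).trans (hdist huv)⟩

lemma dist_euclideanSpace_single_of_ne {ι : Type*} [Fintype ι] [DecidableEq ι] {i j : ι}
    (hij : i ≠ j) (a b : ℝ) :
    dist (EuclideanSpace.single i a) (EuclideanSpace.single j b) = √(a ^ 2 + b ^ 2) := by
  have hinner : inner ℝ (EuclideanSpace.single i a) (EuclideanSpace.single j b) = 0 := by
    simp [EuclideanSpace.inner_single_left, hij]
  rw [dist_eq_norm, ← Real.sqrt_sq (norm_nonneg _), norm_sub_sq_real, hinner]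
  simp

lemma hasUnitDistRep_completeMultipartiteGraph_fin_two (ι : Type*) [Fintype ι] :
    (completeMultipartiteGraph fun _ : ι => Fin 2).HasUnitDistRep (Fintype.card ι) := by
  classical
  rw [← finrank_euclideanSpace (𝕜 := ℝ)]
  have hsq : ∀ k : Fin 2, (![√2⁻¹, -√2⁻¹] k) ^ 2 = (2⁻¹ : ℝ) := by
    simp [Fin.forall_fin_two]
  have hne : ∀ k : Fin 2, ![√2⁻¹, -√2⁻¹] k ≠ 0 := by simp [Fin.forall_fin_two]
  have hinj : Function.Injective ![√2⁻¹, -√2⁻¹] := by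
    intro k l h
    fin_cases k <;> fin_cases l <;> simp [eq_neg_iff_add_eq_zero, neg_eq_iff_add_eq_zero] at h ⊢
  refine hasUnitDistRep_finrank
    (f := fun v => EuclideanSpace.single v.1 (![√2⁻¹, -√2⁻¹] v.2)) ?_ ?_
  · rintro ⟨i, k⟩ ⟨j, l⟩ h
    obtain rfl : i = j := by
      by_contra hij
      exact hne k (by simpa [hij] using congrArg (fun x => x i) h)
    have hkl : k = l := hinj (by simpa using congrArg (fun x => x i) h)
    rw [hkl]
  · intro v w hvw
    rw [dist_euclideanSpace_single_of_ne hvw, hsq, hsq]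
    norm_num

lemma completeMultipartiteGraph_isContained_fin_two {ι : Type*} (s : ι → ℕ) :
    completeMultipartiteGraph (fun i => Fin (s i)) ⊑
      completeMultipartiteGraph fun _ : Σ i, Fin ((s i + 1) / 2) => Fin 2 := by
  refine ⟨⟨⟨fun v => ⟨⟨v.1, ⟨v.2 / 2, by omega⟩⟩, ⟨v.2 % 2, by omega⟩⟩, ?_⟩, ?_⟩⟩
  · intro v w hvw h
    exact hvw (congrArg (fun p : Σ i, Fin ((s i + 1) / 2) => p.1) h)
  · rintro ⟨i, k⟩ ⟨j, l⟩ h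
    obtain rfl : i = j := congrArg (fun p => p.1.1) h
    have hdiv : (k : ℕ) / 2 = l / 2 :=
      congrArg (fun p : Σ _ : Σ i, Fin ((s i + 1) / 2), Fin 2 => (p.1.2 : ℕ)) h
    have hmod : (k : ℕ) % 2 = l % 2 :=
      congrArg (fun p : Σ _ : Σ i, Fin ((s i + 1) / 2), Fin 2 => (p.2 : ℕ)) h
    obtain rfl : k = l := by omega
    rfl

lemma isContained_of_surjective {g : W → V} (hg : Function.Surjective g) (hGH : G.comap g ≤ H) :
    G ⊑ H := by
  obtain ⟨φ, hφ⟩ := hg.hasRightInverse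
  refine ⟨⟨⟨φ, fun {u v} huv => hGH ?_⟩, hφ.injective⟩⟩
  rwa [comap_adj, hφ u, hφ v]

end UnitDistRep

lemma hasUnitDistRep_Gmp (α β γ : ℕ) : (Gmp α β γ).HasUnitDistRep (α + β + 2 * γ) := by
  have h := hasUnitDistRep_of_isContained
    (completeMultipartiteGraph_isContained_fin_two (Gsize α β γ))
    (hasUnitDistRep_completeMultipartiteGraph_fin_two _)
  have hcard : Fintype.card (Σ i, Fin ((Gsize α β γ i + 1) / 2)) = α + β + 2 * γ := by
    simp only [Fintype.card_sigma, Fintype.card_fin, Fintype.sum_sum_type]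
    simp [Gsize, add_assoc, mul_comm]
  rwa [hcard] at h

lemma le_of_hasUnitDistRep_Gmp {α β γ n : ℕ} (hβγ : 2 ≤ β + γ)
    (h : (Gmp α β γ).HasUnitDistRep n) : α + β + 2 * γ ≤ n := by
  obtain ⟨f, hf, hadj⟩ := h
  have hdist : ∀ {i j} (k l), i ≠ j → dist (f ⟨i, k⟩) (f ⟨j, l⟩) = 1 :=
    fun k l hij => hadj (show (Gmp α β γ).Adj ⟨_, k⟩ ⟨_, l⟩ from hij)
  have hinj : ∀ i, Function.Injective fun k => f ⟨i, k⟩ := fun _ => hf.comp sigma_mk_injective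
  have : Nontrivial (Fin β ⊕ Fin γ) := Fintype.one_lt_card_iff_nontrivial.1 (by simpa)
  let s (j : Fin β ⊕ Fin γ) : Set (EuclideanSpace ℝ (Fin n)) := Set.range fun k => f ⟨.inr j, k⟩
  let t (i : Fin α) : EuclideanSpace ℝ (Fin n) := f ⟨.inl i, (0 : Fin 1)⟩
  have hs : ∀ j, (s j).Nonempty := by
    rintro (j | j)
    · exact ⟨_, (0 : Fin 2), rfl⟩
    · exact ⟨_, (0 : Fin 3), rfl⟩
  have hss : Pairwise fun i j => ∀ x ∈ s i, ∀ y ∈ s j, dist x y = 1 := by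
    rintro i j hij _ ⟨k, rfl⟩ _ ⟨l, rfl⟩
    exact hdist k l (Sum.inr_injective.ne hij)
  have hst : ∀ j, ∀ x ∈ s j, ∀ i, dist x (t i) = 1 := by
    rintro j _ ⟨k, rfl⟩ i
    exact hdist k _ Sum.inr_ne_inl
  have ht : Pairwise fun i j => dist (t i) (t j) = 1 :=
    fun i j hij => hdist _ _ (Sum.inl_injective.ne hij)
  have hpair : ∀ j, finrank ℝ (vectorSpan ℝ (s (.inl j))) = 1 := fun j =>
    finrank_vectorSpan_range_fin_two (hinj (.inr (.inl j)))
  have htriple : ∀ l, finrank ℝ (vectorSpan ℝ (s (.inr l))) = 2 := by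
    intro l
    obtain ⟨j, hj⟩ := exists_ne (Sum.inr l : Fin β ⊕ Fin γ)
    obtain ⟨z, hz⟩ := hs j
    have hsphere : Cospherical (s (.inr l)) := ⟨z, 1, fun x hx => hss hj.symm x hx z hz⟩
    exact (hsphere.affineIndependent subset_rfl (hinj (.inr (.inr l)))).finrank_vectorSpan rfl
  have hle := sum_finrank_vectorSpan_add_card_le_finrank hs one_ne_zero hss hst ht
  simp only [Fintype.sum_sum_type, hpair, htriple, Finset.sum_const, Finset.card_fin,
    Fintype.card_fin, smul_eq_mul, finrank_euclideanSpace_fin] at hle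
  omega

lemma udim_Gmp {α β γ : ℕ} (hβγ : 2 ≤ β + γ) : (Gmp α β γ).udim = α + β + 2 * γ :=
  le_antisymm (Nat.sInf_le (hasUnitDistRep_Gmp α β γ))
    (le_csInf ⟨_, hasUnitDistRep_Gmp α β γ⟩ fun _ => le_of_hasUnitDistRep_Gmp hβγ)

/-- Merges the first singleton and the first pair of `G(α + 1, β + 1, γ)` into the first triple of
`G(α, β, γ + 1)`, with the singleton as its vertex `0`. It is a bijection on vertices; only its
surjectivity is recorded, since any section of it embeds `G(α, β, γ + 1)`. -/
def mergeSingletonPair (α β γ : ℕ) : (Σ i, Fin (Gsize (α + 1) (β + 1) γ i)) →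
    Σ i, Fin (Gsize α β (γ + 1) i)
  | ⟨.inl i, k⟩ => Fin.cases ⟨.inr (.inr 0), (0 : Fin 3)⟩ (fun i => ⟨.inl i, k⟩) i
  | ⟨.inr (.inl j), k⟩ =>
    Fin.cases ⟨.inr (.inr 0), Fin.succ (n := 2) k⟩ (fun j => ⟨.inr (.inl j), k⟩) j
  | ⟨.inr (.inr l), k⟩ => ⟨.inr (.inr l.succ), k⟩

lemma mergeSingletonPair_surjective (α β γ : ℕ) :
    Function.Surjective (mergeSingletonPair α β γ) := by
  rintro ⟨i | j | l, k⟩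
  · exact ⟨⟨.inl i.succ, k⟩, rfl⟩
  · exact ⟨⟨.inr (.inl j.succ), k⟩, rfl⟩
  · cases l using Fin.cases with
    | zero =>
      cases (k : Fin 3) using Fin.cases with
      | zero => exact ⟨⟨.inl 0, (0 : Fin 1)⟩, rfl⟩
      | succ k => exact ⟨⟨.inr (.inl 0), k⟩, rfl⟩
    | succ l => exact ⟨⟨.inr (.inr l), k⟩, rfl⟩

lemma mergeSingletonPair_fst_eq {α β γ : ℕ} {x y : Σ i, Fin (Gsize (α + 1) (β + 1) γ i)}
    (h : x.1 = y.1) : (mergeSingletonPair α β γ x).1 = (mergeSingletonPair α β γ y).1 := by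
  obtain ⟨i, k⟩ := x
  obtain ⟨_, l⟩ := y
  obtain rfl := h
  obtain i | j | _ := i
  · cases i using Fin.cases <;> rfl
  · cases j using Fin.cases <;> rfl
  · rfl

/-- The edge of `G(α + 1, β + 1, γ)` from the first singleton to a vertex of the first pair; its
deletion does not lower the dimension. -/
def singletonPairEdge (α β γ : ℕ) : Sym2 (Σ i, Fin (Gsize (α + 1) (β + 1) γ i)) :=
  s(⟨.inl 0, (0 : Fin 1)⟩, ⟨.inr (.inl 0), (0 : Fin 2)⟩)

lemma singletonPairEdge_mem_edgeSet (α β γ : ℕ) :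
    singletonPairEdge α β γ ∈ (Gmp (α + 1) (β + 1) γ).edgeSet :=
  Sum.inl_ne_inr

lemma Gmp_isContained_deleteEdges (α β γ : ℕ) :
    Gmp α β (γ + 1) ⊑ (Gmp (α + 1) (β + 1) γ).deleteEdges {singletonPairEdge α β γ} := by
  refine isContained_of_surjective (mergeSingletonPair_surjective α β γ) fun x y hxy => ?_
  refine deleteEdges_adj.2 ⟨fun h => hxy (mergeSingletonPair_fst_eq h), fun he => ?_⟩
  obtain ⟨rfl, rfl⟩ | ⟨rfl, rfl⟩ := Sym2.eq_iff.1 he <;> exact hxy rfl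

theorem Gmp_alpha_one_one_not_dimCritical_general {α β γ : ℕ} (hα : 1 ≤ α) (hβ : 1 ≤ β)
    (hβγ : 2 ≤ β + γ) : ¬ (Gmp α β γ).IsDimCritical := by
  obtain ⟨a, rfl⟩ := Nat.exists_eq_add_of_le' hα
  obtain ⟨b, rfl⟩ := Nat.exists_eq_add_of_le' hβ
  intro hcrit
  have hlt := hcrit _ (singletonPairEdge_mem_edgeSet a b γ)
  have hle := udim_le_of_isContained (Gmp_isContained_deleteEdges a b γ)
    (hasUnitDistRep_of_isContained (.of_le (deleteEdges_le _)) (hasUnitDistRep_Gmp _ _ _))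
  rw [udim_Gmp (by omega)] at hlt hle
  omega

theorem Gmp_alpha_one_one_not_dimCritical (α : ℕ) (hα : 1 ≤ α) :
    ¬ (Gmp α 1 1).IsDimCritical :=
  Gmp_alpha_one_one_not_dimCritical_general hα le_rfl le_rfl
end
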